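/- Let G be an abelian group and g = (g₁,…,g_m) ∈ G^m such that g₁,…,g_m generate a finite subgroup of G. Grade ℬ(g) by total degree |α| = Σ α_i. Then c_gr(ℬ(g)) ≤ 2·d(supp(g)) + 2, where d(supp(g)) is the little Davenport constant of supp(g). -/

import Mathlib

/-! The graded catenary degree is at most `2 d + 2`, with `d = d(supp g)`.

Write `|α| = ∑ α i`. The one property of `d` that matters is that every `α ∈ ℕ₀^m` with `|α| > d`
dominates an atom of `ℬ(g)` (`exists_atom_le`).

By induction on `|s|`, two factorizations of `s` sharing an atom are connected by removing that atom,
and if `|s| ≤ 2 d + 2` a single step suffices. So let `|s| ≥ 2 d + 3`, and let `a`, `b` be atoms below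
`s`, lying in factorizations `α`, `γ` of `s`. Then `α` and `γ` are connected by induction on
`|a ⊔ b|` (`linked_of_atoms`):

* if `|a ⊔ b| ≤ d + 2`, there is room for an atom `c ≤ s - a ⊔ b`, so some factorization of `s`
  contains `a` and `c` and another contains `b` and `c`;
* otherwise choose `x`, `y` with `a x < b x` and `b y < a y` and an atom `c ≤ a ⊔ b - e_x - e_y`;
  both `|a ⊔ c|` and `|c ⊔ b|` are smaller than `|a ⊔ b|`, and a factorization of `s` through `c`
  is connected to `α` and to `γ`.

This is a combinatorial form of the syzygy bound for invariant rings: the ideal generated by the atoms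
in the polynomial ring has regularity at most `d + 1`, so its first syzygies are generated in degree
`≤ d + 2`, and the first Koszul homology of the atoms is annihilated by that ideal. -/

/-! ## Common definitions: atoms, factorizations, catenary degrees -/

/-- An atom of an additive commutative monoid: a nonzero element that cannot be
written as a sum of two nonzero elements. -/
def IsAtm {S : Type*} [AddCommMonoid S] (a : S) : Prop :=
  a ≠ 0 ∧ ∀ b c : S, a = b + c → b = 0 ∨ c = 0

/-- The set of atoms of an additive commutative monoid. -/
def Atoms (S : Type*) [AddCommMonoid S] : Set S := {a | IsAtm a}

/-- Exponent vectors: the free commutative monoid on the set of atoms (written additively). -/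
abbrev FreeExp (S : Type*) [AddCommMonoid S] := ↥(Atoms S) →₀ ℕ

/-- The factorization homomorphism, sending an exponent vector `α` to `a^α ∈ S`. -/
def fac {S : Type*} [AddCommMonoid S] (α : FreeExp S) : S :=
  α.sum fun a n => n • (a : S)

lemma fac_add {S : Type*} [AddCommMonoid S] (α β : FreeExp S) :
    fac (α + β) = fac α + fac β :=
  Finsupp.sum_add_index' (fun _ => zero_nsmul _) (fun a m n => add_nsmul (a : S) m n)

/-- Total degree (length) `|α|` of an exponent vector. -/
def degE {σ : Type*} (α : σ →₀ ℕ) : ℕ := α.sum fun _ n => n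

/-- Pointwise minimum (the gcd in the free commutative monoid). -/
noncomputable def gcdE {σ : Type*} (α β : σ →₀ ℕ) : σ →₀ ℕ :=
  Finsupp.zipWith min (min_self 0) α β

/-- The distance `d(α,γ)` between two exponent vectors. -/
noncomputable def dDist {σ : Type*} (α β : σ →₀ ℕ) : ℕ :=
  max (degE (α - gcdE α β)) (degE (β - gcdE α β))

/-- `α` and `γ` can be connected by a `d`-chain. -/
def ChainConn {S : Type*} [AddCommMonoid S] (d : ℕ) (α γ : FreeExp S) : Prop :=
  ∃ (k : ℕ) (c : ℕ → FreeExp S), c 0 = α ∧ c k = γ ∧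
    ∀ j < k, fac (c j) = fac (c (j + 1)) ∧ dDist (c j) (c (j + 1)) ≤ d

/-- The catenary degree of `S`. -/
noncomputable def catDeg (S : Type*) [AddCommMonoid S] : ℕ :=
  sInf {d | ∀ α γ : FreeExp S, fac α = fac γ → ChainConn d α γ}

/-- Graded degree `|α|_gr` of an exponent vector, w.r.t. a weight (grading) `w` on `S`. -/
def gdegE {S : Type*} [AddCommMonoid S] (w : S → ℕ) (α : FreeExp S) : ℕ :=
  α.sum fun a n => n * w (a : S)

/-- The graded distance `d_gr(α,γ)`. -/
noncomputable def dDistGr {S : Type*} [AddCommMonoid S] (w : S → ℕ) (α β : FreeExp S) : ℕ :=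
  max (gdegE w (α - gcdE α β)) (gdegE w (β - gcdE α β))

/-- `α` and `γ` can be connected by a chain of weight at most `d`. -/
def ChainConnGr {S : Type*} [AddCommMonoid S] (w : S → ℕ) (d : ℕ) (α γ : FreeExp S) : Prop :=
  ∃ (k : ℕ) (c : ℕ → FreeExp S), c 0 = α ∧ c k = γ ∧
    ∀ j < k, fac (c j) = fac (c (j + 1)) ∧ dDistGr w (c j) (c (j + 1)) ≤ d

/-- The graded catenary degree of `S` w.r.t. the grading `w`. -/
noncomputable def catDegGr (S : Type*) [AddCommMonoid S] (w : S → ℕ) : ℕ :=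
  sInf {d | ∀ α γ : FreeExp S, fac α = fac γ → ChainConnGr w d α γ}

/-- The defining congruence `∼_S` of `S` on the free commutative monoid on the atoms. -/
def defCon (S : Type*) [AddCommMonoid S] : AddCon (FreeExp S) where
  r α β := fac α = fac β
  iseqv := ⟨fun _ => rfl, Eq.symm, Eq.trans⟩
  add' := fun {a b c d} h1 h2 => by
    have h1' : fac a = fac b := h1
    have h2' : fac c = fac d := h2
    show fac (a + c) = fac (b + d)
    rw [fac_add, fac_add, h1', h2']

/-- A reduced affine monoid: commutative, cancellative, a finitely generated monoid embedding
into a finitely generated free abelian group, whose only unit is the identity. -/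
class IsReducedAffine (S : Type*) [AddCommMonoid S] : Prop where
  cancel : ∀ a b c : S, a + b = a + c → b = c
  affine : ∃ (k : ℕ) (f : S →+ (Fin k → ℤ)), Function.Injective f
  fg : AddMonoid.FG S
  reduced : ∀ s : S, IsAddUnit s → s = 0

/-! ## The tilde construction -/

/-- The atoms of `S̃`: pairs `a[i]` with `a` an atom of `S` and `0 ≤ i ≤ |a|`. -/
def ATil (S : Type*) [AddCommMonoid S] (w : S → ℕ) : Type _ :=
  {p : ↥(Atoms S) × ℕ // p.2 ≤ w (p.1 : S)}

/-- Constructor `a[i]` for atoms of `S̃`. -/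
def atil {S : Type*} [AddCommMonoid S] (w : S → ℕ) (a : ↥(Atoms S)) (i : ℕ)
    (h : i ≤ w (a : S)) : ATil S w := ⟨(a, i), h⟩

/-- The map `κ : ℕ₀^{𝒜(S̃)} → ℕ₀^{𝒜(S)}`, `κ(λ)(a) = Σ_i λ(a[i])`. -/
noncomputable def kap (S : Type*) [AddCommMonoid S] (w : S → ℕ) :
    (ATil S w →₀ ℕ) → FreeExp S :=
  Finsupp.mapDomain fun p => p.val.1

/-- The map `δ : ℕ₀^{𝒜(S̃)} → ℕ₀`, `δ(λ) = Σ i·λ(a[i])`. -/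
def delt {S : Type*} [AddCommMonoid S] (w : S → ℕ) (l : ATil S w →₀ ℕ) : ℕ :=
  l.sum fun p n => n * p.val.2

lemma kap_add {S : Type*} [AddCommMonoid S] (w : S → ℕ) (l m : ATil S w →₀ ℕ) :
    kap S w (l + m) = kap S w l + kap S w m := Finsupp.mapDomain_add

lemma delt_add {S : Type*} [AddCommMonoid S] (w : S → ℕ) (l m : ATil S w →₀ ℕ) :
    delt w (l + m) = delt w l + delt w m :=
  Finsupp.sum_add_index' (fun _ => zero_mul _) (fun _ m n => add_mul m n _)

/-- The defining congruence of `S̃` (under the identification `𝒜(S̃) = {a[i]}`,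
`x^λ ∼_{S̃} x^μ` iff `a^{κλ} = a^{κμ}` in `S` and `δλ = δμ`). -/
def defConTil (S : Type*) [AddCommMonoid S] (w : S → ℕ) : AddCon (ATil S w →₀ ℕ) where
  r l m := fac (kap S w l) = fac (kap S w m) ∧ delt w l = delt w m
  iseqv := ⟨fun _ => ⟨rfl, rfl⟩, fun h => ⟨h.1.symm, h.2.symm⟩,
    fun h h' => ⟨h.1.trans h'.1, h.2.trans h'.2⟩⟩
  add' := fun h1 h2 =>
    ⟨by rw [kap_add, kap_add, fac_add, fac_add, h1.1, h2.1],
     by rw [delt_add, delt_add, h1.2, h2.2]⟩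

/-- The quadratic relations `(x_{a[k]} x_{b[l]}, x_{a[k+1]} x_{b[l-1]})`,
for `a, b ∈ 𝒜(S)`, `0 ≤ k ≤ |a| - 1`, `1 ≤ l ≤ |b|`. -/
def quadRel (S : Type*) [AddCommMonoid S] (w : S → ℕ) :
    (ATil S w →₀ ℕ) → (ATil S w →₀ ℕ) → Prop := fun x y =>
  ∃ (a b : ↥(Atoms S)) (k l : ℕ) (hk : k + 1 ≤ w (a : S)) (_ : 1 ≤ l) (hl : l ≤ w (b : S)),
    x = Finsupp.single (atil w a k (Nat.le_of_succ_le hk)) 1 +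
        Finsupp.single (atil w b l hl) 1 ∧
    y = Finsupp.single (atil w a (k + 1) hk) 1 +
        Finsupp.single (atil w b (l - 1) (le_trans (Nat.sub_le l 1) hl)) 1

/-! ## Block monoids -/

/-- The block monoid `ℬ(g)` of a tuple `g = (g₁,…,g_m)` of elements of a commutative
monoid `G`. -/
def BlockT {G : Type*} [CommMonoid G] {m : ℕ} (g : Fin m → G) :
    AddSubmonoid (Fin m → ℕ) where
  carrier := {α | ∏ i, g i ^ α i = 1}
  zero_mem' := by simp
  add_mem' := by
    intro a b ha hb
    simp only [Set.mem_setOf_eq] at *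
    show ∏ i, g i ^ (a i + b i) = 1
    simp [pow_add, Finset.prod_mul_distrib, ha, hb]

/-- The block monoid `ℬ(G₀)` of a subset `G₀` of a commutative monoid `G`. -/
noncomputable def BlockS {G : Type*} [CommMonoid G] (G₀ : Set G) : AddSubmonoid (G₀ →₀ ℕ) where
  carrier := {α | (α.prod fun x n => (x : G) ^ n) = 1}
  zero_mem' := by simp
  add_mem' := by
    intro a b ha hb
    simp only [Set.mem_setOf_eq] at *
    rw [Finsupp.prod_add_index' (fun x => pow_zero _) (fun x m n => pow_add _ m n), ha, hb,
      one_mul]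

/-- The monoid `S̃` for `S = ℬ(g)` graded by the last coordinate. -/
def TildeB {G : Type*} [CommMonoid G] {m : ℕ} (g : Fin (m + 1) → G) :
    AddSubmonoid ((Fin (m + 1) → ℕ) × ℕ) where
  carrier := {p | p.1 ∈ BlockT g ∧ p.2 ≤ p.1 (Fin.last m)}
  zero_mem' := ⟨(BlockT g).zero_mem, le_rfl⟩
  add_mem' := by
    intro a b ha hb
    exact ⟨(BlockT g).add_mem ha.1 hb.1, add_le_add ha.2 hb.2⟩

/-- The Davenport constant `D(G₀)`: the maximal length of an atom of `ℬ(G₀)`. -/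
noncomputable def DavenportC {G : Type*} [CommMonoid G] (G₀ : Set G) : ℕ :=
  sSup {k | ∃ γ : ↥(BlockS G₀), IsAtm γ ∧ degE (γ : G₀ →₀ ℕ) = k}

/-- The little Davenport constant `d(G₀)`: the maximal length of a sequence over `G₀`
containing no product-one subsequence. -/
noncomputable def littleDav {G : Type*} [CommMonoid G] (G₀ : Set G) : ℕ :=
  sSup {k | ∃ α : G₀ →₀ ℕ, degE α = k ∧
    ∀ γ : ↥(BlockS G₀), IsAtm γ → ∃ x : G₀, α x < (γ : G₀ →₀ ℕ) x}

/-! ## Gröbner systems -/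

/-- An admissible total order (given as a strict order relation) on a free commutative
monoid, written additively. -/
def IsAdmissible {F : Type*} [AddCommMonoid F] (lt : F → F → Prop) : Prop :=
  (∀ x y, lt x y ∨ x = y ∨ lt y x) ∧ (∀ x y z, lt x y → lt y z → lt x z) ∧
  (∀ x, ¬ lt x x) ∧ (∀ x y z, lt x y → lt (x + z) (y + z)) ∧ (∀ x, x ≠ 0 → lt 0 x)

/-- `Λ` is a Gröbner system of the congruence `c` with respect to the order `lt`. -/
def IsGroebnerSystem {F : Type*} [AddCommMonoid F] (lt : F → F → Prop) (c : AddCon F)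
    (Λ : Set (F × F)) : Prop :=
  Λ.Finite ∧ (∀ p ∈ Λ, c p.1 p.2 ∧ lt p.2 p.1) ∧
  (∀ z : F, (∀ p ∈ Λ, ¬ ∃ u, z = p.1 + u) → ∀ y, c z y → z = y ∨ lt z y)

/-- The ordering on positions `a[i]` induced by an enumeration of the atoms. -/
def posLt {S : Type*} [AddCommMonoid S] {w : S → ℕ} {n : ℕ} (e : Fin n ≃ ↥(Atoms S))
    (q p : ATil S w) : Prop :=
  e.symm q.val.1 < e.symm p.val.1 ∨ (e.symm q.val.1 = e.symm p.val.1 ∧ q.val.2 < p.val.2)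

/-- The admissible order on the free commutative monoid on `𝒜(S̃)` extending the order
`lt` on the free commutative monoid on `𝒜(S)`. -/
def ltTil {S : Type*} [AddCommMonoid S] (w : S → ℕ) (lt : FreeExp S → FreeExp S → Prop)
    {n : ℕ} (e : Fin n ≃ ↥(Atoms S)) (mu lam : ATil S w →₀ ℕ) : Prop :=
  lt (kap S w mu) (kap S w lam) ∨
  (kap S w mu = kap S w lam ∧
    ∃ p : ATil S w, lam p < mu p ∧ ∀ q : ATil S w, posLt e q p → mu q = lam q)

/-- The set `Γ₂` of pairs `(x_{a[i]} x_{b[j]}, x_{a[i-1]} x_{b[j+1]})` with `x_a ≺ x_b`,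
`0 < i ≤ |a|`, `0 ≤ j < |b|`. -/
def Gam2 (S : Type*) [AddCommMonoid S] (w : S → ℕ) (lt : FreeExp S → FreeExp S → Prop) :
    Set ((ATil S w →₀ ℕ) × (ATil S w →₀ ℕ)) :=
  {pr | ∃ (a b : ↥(Atoms S)) (i j : ℕ) (_ : 0 < i) (hi : i ≤ w (a : S)) (hj : j + 1 ≤ w (b : S)),
    lt (Finsupp.single a 1) (Finsupp.single b 1) ∧
    pr = (Finsupp.single (atil w a i hi) 1 +
            Finsupp.single (atil w b j (Nat.le_of_succ_le hj)) 1,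
          Finsupp.single (atil w a (i - 1) (le_trans (Nat.sub_le i 1) hi)) 1 +
            Finsupp.single (atil w b (j + 1) hj) 1)}

/-- The set `Γ₃` of pairs `(x_{a[i]} x_{a[j]}, x_{a[i-1]} x_{a[j+1]})` with `0 < i ≤ j < |a|`. -/
def Gam3 (S : Type*) [AddCommMonoid S] (w : S → ℕ) :
    Set ((ATil S w →₀ ℕ) × (ATil S w →₀ ℕ)) :=
  {pr | ∃ (a : ↥(Atoms S)) (i j : ℕ) (_ : 0 < i) (hij : i ≤ j) (hj : j + 1 ≤ w (a : S)),
    pr = (Finsupp.single (atil w a i (le_trans hij (Nat.le_of_succ_le hj))) 1 +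
            Finsupp.single (atil w a j (Nat.le_of_succ_le hj)) 1,
          Finsupp.single (atil w a (i - 1)
              (le_trans (Nat.sub_le i 1) (le_trans hij (Nat.le_of_succ_le hj)))) 1 +
            Finsupp.single (atil w a (j + 1) hj) 1)}

/-! ## The presentation homomorphism for semigroup rings -/

/-- The homomorphism `π_R : R[x_a : a ∈ 𝒜(S)] → R[S]`, `x_a ↦ a`. -/
noncomputable def piR (R : Type*) (S : Type*) [CommRing R] [AddCommMonoid S] :
    MvPolynomial ↥(Atoms S) R →ₐ[R] AddMonoidAlgebra R S :=
  MvPolynomial.aeval fun a => AddMonoidAlgebra.single (a : S) 1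

/-! ### Atoms and factorizations in a graded monoid -/

section Graded

variable {S : Type*} [AddCommMonoid S]

lemma exists_atom_add (w : S →+ ℕ) (hw : ∀ s, w s = 0 → s = 0) (s : S) (hs : s ≠ 0) :
    ∃ a t : S, IsAtm a ∧ s = a + t := by
  induction h : w s using Nat.strong_induction_on generalizing s with
  | _ n ih =>
    by_cases hA : IsAtm s
    · exact ⟨s, 0, hA, (add_zero s).symm⟩
    · simp only [IsAtm, not_and, not_forall, not_or] at hA
      obtain ⟨b, c, hbc, hb, hc⟩ := hA hs
      have hwc : w c ≠ 0 := fun h0 => hc (hw c h0)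
      have hsum : w s = w b + w c := by rw [hbc, map_add]
      obtain ⟨a, t, ha, hat⟩ := ih (w b) (by omega) b hb rfl
      exact ⟨a, t + c, ha, by rw [hbc, hat, add_assoc]⟩

lemma fac_single (a : Atoms S) : fac (Finsupp.single a 1) = (a : S) := by
  simp [fac]

lemma exists_fac (w : S →+ ℕ) (hw : ∀ s, w s = 0 → s = 0) (s : S) :
    ∃ α : FreeExp S, fac α = s := by
  induction h : w s using Nat.strong_induction_on generalizing s with
  | _ n ih =>
    by_cases hs : s = 0
    · exact ⟨0, by simp [fac, hs]⟩
    · obtain ⟨a, t, ha, rfl⟩ := exists_atom_add w hw s hs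
      have hwa : w a ≠ 0 := fun h0 => ha.1 (hw a h0)
      have hsum : w (a + t) = w a + w t := map_add w a t
      obtain ⟨τ, hτ⟩ := ih (w t) (by omega) t rfl
      exact ⟨Finsupp.single ⟨a, ha⟩ 1 + τ, by rw [fac_add, fac_single, hτ]⟩

lemma gdegE_eq (w : S →+ ℕ) (α : FreeExp S) : gdegE w α = w (fac α) := by
  simp [gdegE, fac, Finsupp.sum, map_sum]

lemma gdegE_sub_le (w : S →+ ℕ) (α β : FreeExp S) : gdegE w (α - β) ≤ gdegE w α := by
  have h : gdegE w α = gdegE w (α - β) + gdegE w (α - (α - β)) := by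
    rw [gdegE_eq, gdegE_eq, gdegE_eq, ← map_add, ← fac_add,
      add_tsub_cancel_of_le (tsub_le_self : α - β ≤ α)]
  omega

/-- One step of a graded `d`-chain. -/
def Step (w : S →+ ℕ) (d : ℕ) (α γ : FreeExp S) : Prop :=
  fac α = fac γ ∧ dDistGr w α γ ≤ d

/-- Connectedness by a graded `d`-chain, as the reflexive transitive closure of `Step`. -/
def Linked (w : S →+ ℕ) (d : ℕ) : FreeExp S → FreeExp S → Prop :=
  Relation.ReflTransGen (Step w d)

lemma Linked.chainConnGr {w : S →+ ℕ} {d : ℕ} {α γ : FreeExp S} (h : Linked w d α γ) :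
    ChainConnGr w d α γ := by
  induction h using Relation.ReflTransGen.head_induction_on with
  | refl => exact ⟨0, fun _ => γ, rfl, rfl, by simp⟩
  | @head a b h _ ih =>
    obtain ⟨k, c, h0, hk, hc⟩ := ih
    refine ⟨k + 1, fun j => Nat.casesOn j a c, rfl, hk, ?_⟩
    rintro (_ | j) hj
    · subst h0
      exact h
    · exact hc j (by omega)

/-- Adding a common part to both factorizations leaves their graded distance unchanged. -/
lemma Step.add_right {w : S →+ ℕ} {d : ℕ} {α γ : FreeExp S} (h : Step w d α γ)
    (τ : FreeExp S) : Step w d (α + τ) (γ + τ) := by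
  refine ⟨by rw [fac_add, fac_add, h.1], ?_⟩
  have hg : gcdE (α + τ) (γ + τ) = gcdE α γ + τ := by
    ext a
    simp [gcdE, min_add_add_right]
  have := h.2
  simpa only [dDistGr, hg, add_tsub_add_eq_tsub_right] using this

lemma Linked.add_right {w : S →+ ℕ} {d : ℕ} {α γ : FreeExp S} (h : Linked w d α γ)
    (τ : FreeExp S) : Linked w d (α + τ) (γ + τ) :=
  Relation.ReflTransGen.lift (p := Step w d) (· + τ)
    (fun _ _ (h : Step w d _ _) => h.add_right τ) α γ h

/-- Factorizations of an element of degree at most `d` are a single `d`-step apart. -/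
lemma linked_of_le {w : S →+ ℕ} {d : ℕ} {α γ : FreeExp S} (h : fac α = fac γ)
    (hd : w (fac α) ≤ d) : Linked w d α γ := by
  refine Relation.ReflTransGen.single ⟨h, max_le ?_ ?_⟩
  · exact (gdegE_sub_le w _ _).trans (by rwa [gdegE_eq])
  · exact (gdegE_sub_le w _ _).trans (by rwa [gdegE_eq, ← h])

end Graded

/-! ### Long sequences dominate atoms -/

section Davenport

variable {G : Type*} [CommGroup G] {m : ℕ}

/-- Total degree on `ℬ(g)`. -/
def wT (g : Fin m → G) : ↥(BlockT g) →+ ℕ where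
  toFun α := ∑ i, (α : Fin m → ℕ) i
  map_zero' := by simp
  map_add' a b := by simp [Finset.sum_add_distrib]

lemma wT_apply (g : Fin m → G) (α : BlockT g) : wT g α = ∑ i, (α : Fin m → ℕ) i := rfl

lemma eq_zero_of_wT (g : Fin m → G) (s : BlockT g) (h : wT g s = 0) : s = 0 := by
  ext i
  rw [wT_apply, Finset.sum_eq_zero_iff] at h
  exact h i (Finset.mem_univ i)

/-- Divisibility in `ℬ(g)` is the pointwise order, since `G` is a group. -/
lemma blockT_add_of_le {g : Fin m → G} {a s : BlockT g}
    (h : (a : Fin m → ℕ) ≤ (s : Fin m → ℕ)) : ∃ t : BlockT g, s = a + t := by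
  have ha : ∏ i, g i ^ (a : Fin m → ℕ) i = 1 := a.2
  have hs : ∏ i, g i ^ (s : Fin m → ℕ) i = 1 := s.2
  refine ⟨⟨(s : Fin m → ℕ) - a, ?_⟩, Subtype.ext (add_tsub_cancel_of_le h).symm⟩
  change ∏ i, g i ^ ((s : Fin m → ℕ) i - (a : Fin m → ℕ) i) = 1
  have : (∏ i, g i ^ (a : Fin m → ℕ) i) *
      ∏ i, g i ^ ((s : Fin m → ℕ) i - (a : Fin m → ℕ) i) = 1 := by
    rw [← Finset.prod_mul_distrib, ← hs]
    refine Finset.prod_congr rfl fun i _ => ?_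
    rw [← pow_add, add_tsub_cancel_of_le (h i)]
  rwa [ha, one_mul] at this

lemma exists_atom_le_of_ne_zero (g : Fin m → G) (s : BlockT g) (hs : s ≠ 0) :
    ∃ c : BlockT g, IsAtm c ∧ (c : Fin m → ℕ) ≤ s := by
  obtain ⟨a, t, ha, rfl⟩ := exists_atom_add (wT g) (eq_zero_of_wT g) s hs
  exact ⟨a, ha, fun i => Nat.le_add_right _ _⟩

/-- Any nonzero element of `ℬ(G₀)` dominates an atom. -/
lemma exists_atom_le_blockS (G₀ : Set G) (s : BlockS G₀) (hs : s ≠ 0) :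
    ∃ c : BlockS G₀, IsAtm c ∧ (c : G₀ →₀ ℕ) ≤ s := by
  let w : ↥(BlockS G₀) →+ ℕ := Finsupp.degree.comp (BlockS G₀).subtype
  obtain ⟨a, t, ha, rfl⟩ := exists_atom_add w
    (fun s h => Subtype.ext ((Finsupp.degree_eq_zero_iff _).1 h)) s hs
  exact ⟨a, ha, fun i => Nat.le_add_right _ _⟩

/-- The supremum defining `littleDav` is not a junk value: each element of a product-one free sequence
over `G₀` occurs fewer times than the order of the (finite) generated subgroup. -/
lemma bddAbove_littleDav (G₀ : Set G) [Finite G₀]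
    (hfin : (Subgroup.closure G₀ : Set G).Finite) :
    BddAbove {k | ∃ α : G₀ →₀ ℕ, degE α = k ∧
      ∀ γ : ↥(BlockS G₀), IsAtm γ → ∃ x : G₀, α x < (γ : G₀ →₀ ℕ) x} := by
  classical
  have := Fintype.ofFinite G₀
  have : Finite (Subgroup.closure G₀) := hfin
  refine ⟨∑ _x : G₀, Nat.card (Subgroup.closure G₀), ?_⟩
  rintro k ⟨α, rfl, hα⟩
  rw [degE, Finsupp.sum_fintype _ _ fun _ => rfl]
  refine Finset.sum_le_sum fun x _ => ?_
  by_contra! hx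
  set N := Nat.card (Subgroup.closure G₀) with hN
  have hN0 : 0 < N := Nat.card_pos
  have hpow : (x : G) ^ N = 1 := by
    have h := pow_card_eq_one' (x := (⟨x, Subgroup.subset_closure x.2⟩ : Subgroup.closure G₀))
    exact congrArg Subtype.val h
  obtain ⟨c, hc, hcle⟩ := exists_atom_le_blockS G₀
    ⟨Finsupp.single x N, by
      change ((Finsupp.single x N).prod fun y n => (y : G) ^ n) = 1
      rw [Finsupp.prod_single_index (h := fun (y : G₀) n => (y : G) ^ n) (pow_zero _), hpow]⟩
    (fun h => by
      have h1 := congrArg Subtype.val h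
      have h2 : Finsupp.single x N = 0 := h1
      rw [Finsupp.single_eq_zero] at h2
      omega)
  obtain ⟨y, hy⟩ := hα c hc
  have h3 : (c : G₀ →₀ ℕ) y ≤ Finsupp.single x N y := hcle y
  rw [Finsupp.single_apply] at h3
  split_ifs at h3 with h
  · subst h
    omega
  · omega

lemma exists_le_sum_eq {ι : Type*} (s : Finset ι) (α : ι → ℕ) (n : ℕ) (h : n ≤ ∑ i ∈ s, α i) :
    ∃ β : ι → ℕ, β ≤ α ∧ ∑ i ∈ s, β i = n := by
  classical
  induction s using Finset.induction_on generalizing n with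
  | empty => exact ⟨0, fun _ => Nat.zero_le _, by simp at h; simp [h]⟩
  | insert j s hj ih =>
    rw [Finset.sum_insert hj] at h
    obtain ⟨β, hβ, hsum⟩ := ih (n - min n (α j)) (by omega)
    refine ⟨Function.update β j (min n (α j)), ?_, ?_⟩
    · intro i
      by_cases hi : i = j
      · subst hi
        simp
      · simpa [hi] using hβ i
    · rw [Finset.sum_insert hj, Function.update_self,
        Finset.sum_congr rfl fun i hi => Function.update_of_ne (ne_of_mem_of_not_mem hi hj) _ _,
        hsum]
      omega

/-- The tuple `g` may repeat elements, so `ℬ(g)` is compared with `ℬ(supp g)` by adding up the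
exponents over each fibre of `g`; atoms of `ℬ(supp g)` below the result lift to `ℬ(g)`. -/
lemma exists_atom_le (g : Fin m → G) (hfin : (Subgroup.closure (Set.range g) : Set G).Finite)
    (α : Fin m → ℕ) (h : littleDav (Set.range g) < ∑ i, α i) :
    ∃ c : BlockT g, IsAtm c ∧ (c : Fin m → ℕ) ≤ α := by
  classical
  have := Fintype.ofFinite (Set.range g)
  let f : Fin m → Set.range g := fun i => ⟨g i, i, rfl⟩
  let push : (Fin m → ℕ) → (Set.range g →₀ ℕ) := fun α =>
    Finsupp.equivFunOnFinite.symm fun x => ∑ i with f i = x, α i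
  by_contra! hcon
  refine absurd h (not_lt.2 (le_csSup (bddAbove_littleDav _ hfin) ⟨push α, ?_, ?_⟩))
  · rw [degE, Finsupp.sum_fintype _ _ fun _ => rfl]
    exact Finset.sum_fiberwise Finset.univ f α
  · intro γ hγ
    by_contra! hle
    choose β hβ hβγ using fun x => exists_le_sum_eq {i | f i = x} α
      ((γ : Set.range g →₀ ℕ) x) (hle x)
    let δ : Fin m → ℕ := fun i => β (f i) i
    have hδγ : ∀ x, ∑ i with f i = x, δ i = (γ : Set.range g →₀ ℕ) x := by
      intro x
      rw [← hβγ x]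
      refine Finset.sum_congr rfl fun i hi => ?_
      rw [← (Finset.mem_filter.1 hi).2]
    have hδ : δ ∈ BlockT g := by
      have hγ1 : ((γ : Set.range g →₀ ℕ).prod fun x n => (x : G) ^ n) = 1 := γ.2
      rw [Finsupp.prod_fintype _ _ fun _ => pow_zero _] at hγ1
      change ∏ i, g i ^ δ i = 1
      rw [← hγ1, ← Finset.prod_fiberwise Finset.univ f]
      refine Finset.prod_congr rfl fun x _ => ?_
      rw [← hδγ x, ← Finset.prod_pow_eq_pow_sum]
      refine Finset.prod_congr rfl fun i hi => ?_
      rw [← (Finset.mem_filter.1 hi).2]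
    have hδ0 : (⟨δ, hδ⟩ : BlockT g) ≠ 0 := by
      intro h0
      have h1 : δ = 0 := congrArg Subtype.val h0
      refine hγ.1 (Subtype.ext (Finsupp.ext fun x => ?_))
      rw [← hδγ x, h1]
      simp
    obtain ⟨c, hc, hcle⟩ := exists_atom_le_of_ne_zero g ⟨δ, hδ⟩ hδ0
    exact hcon c hc (hcle.trans fun i => hβ (f i) i)

end Davenport

/-! ### Connecting factorizations -/

section Catenary

variable {G : Type*} [CommGroup G] {m : ℕ}

/-- Distinct atoms of `ℬ(g)` are incomparable in the pointwise order. -/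
lemma exists_lt_of_atoms_ne {g : Fin m → G} {a b : BlockT g} (ha : IsAtm a) (hb : IsAtm b)
    (hab : a ≠ b) : ∃ x, (a : Fin m → ℕ) x < (b : Fin m → ℕ) x := by
  by_contra! hle
  obtain ⟨t, ht⟩ := blockT_add_of_le (a := b) (s := a) hle
  rcases ha.2 b t ht with h | h
  · exact hb.1 h
  · exact hab (by rw [ht, h, add_zero])

lemma exists_fac_of_le {g : Fin m → G} {s : BlockT g} (a : Atoms (BlockT g))
    (h : ((a : BlockT g) : Fin m → ℕ) ≤ s) :
    ∃ τ : FreeExp (BlockT g), fac (Finsupp.single a 1 + τ) = s := by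
  obtain ⟨t, ht⟩ := blockT_add_of_le h
  obtain ⟨τ, hτ⟩ := exists_fac (wT g) (eq_zero_of_wT g) t
  exact ⟨τ, by rw [fac_add, fac_single, hτ, ht]⟩

lemma atom_le_fac {g : Fin m → G} {s : BlockT g} {a : Atoms (BlockT g)}
    {α : FreeExp (BlockT g)} (h : fac (Finsupp.single a 1 + α) = s) :
    ((a : BlockT g) : Fin m → ℕ) ≤ s := by
  rw [← h, fac_add, fac_single]
  exact fun i => Nat.le_add_right _ _

/-- If any two factorizations of `s` that share an atom are linked and `|s| > 2 d + 2`, then any two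
factorizations of `s` are linked, by induction on the degree of the least common multiple of an atom
`a` of the first and an atom `b` of the second. -/
lemma linked_of_atoms {g : Fin m → G} {d D : ℕ}
    (hd : ∀ α : Fin m → ℕ, d < ∑ i, α i → ∃ c : BlockT g, IsAtm c ∧ (c : Fin m → ℕ) ≤ α)
    {s : BlockT g} (hs : 2 * d + 2 < wT g s)
    (share : ∀ (a : Atoms (BlockT g)) (α γ : FreeExp (BlockT g)),
      fac (Finsupp.single a 1 + α) = s → fac (Finsupp.single a 1 + γ) = s →
      Linked (wT g) D (Finsupp.single a 1 + α) (Finsupp.single a 1 + γ))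
    (n : ℕ) (a b : Atoms (BlockT g))
    (hn : ∑ i, max (((a : BlockT g) : Fin m → ℕ) i) (((b : BlockT g) : Fin m → ℕ) i) = n)
    (α γ : FreeExp (BlockT g)) (hα : fac (Finsupp.single a 1 + α) = s)
    (hγ : fac (Finsupp.single b 1 + γ) = s) :
    Linked (wT g) D (Finsupp.single a 1 + α) (Finsupp.single b 1 + γ) := by
  induction n using Nat.strong_induction_on generalizing a b α γ with
  | _ n ih =>
    set u : Fin m → ℕ := ((a : BlockT g) : Fin m → ℕ) with hu
    set v : Fin m → ℕ := ((b : BlockT g) : Fin m → ℕ) with hv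
    have hus : u ≤ s := atom_le_fac hα
    have hvs : v ≤ s := atom_le_fac hγ
    by_cases hab : a = b
    · subst hab
      exact share a α γ hα hγ
    have hab' : (a : BlockT g) ≠ b := fun h => hab (Subtype.ext h)
    by_cases hsmall : n ≤ d + 2
    · have hroom : d < ∑ i, ((s : Fin m → ℕ) i - max (u i) (v i)) := by
        have hadd : ∑ i, ((s : Fin m → ℕ) i - max (u i) (v i)) + ∑ i, max (u i) (v i) = wT g s := by
          rw [← Finset.sum_add_distrib, wT_apply]
          refine Finset.sum_congr rfl fun i _ => ?_
          exact tsub_add_cancel_of_le (max_le (hus i) (hvs i))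
        omega
      obtain ⟨c, hc, hcle⟩ := hd _ hroom
      have hcle' : ∀ i, (c : Fin m → ℕ) i + max (u i) (v i) ≤ (s : Fin m → ℕ) i := by
        intro i
        have h1 : (c : Fin m → ℕ) i ≤ (s : Fin m → ℕ) i - max (u i) (v i) := hcle i
        have h2 : u i ≤ (s : Fin m → ℕ) i := hus i
        have h3 : v i ≤ (s : Fin m → ℕ) i := hvs i
        omega
      -- `s` has a factorization through `c` and any `e` with `e + c ≤ s`
      have key : ∀ e : Atoms (BlockT g),
          (∀ i, (c : Fin m → ℕ) i + ((e : BlockT g) : Fin m → ℕ) i ≤ (s : Fin m → ℕ) i) →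
          ∃ τ : FreeExp (BlockT g), fac (Finsupp.single e 1 +
            (Finsupp.single (⟨c, hc⟩ : Atoms (BlockT g)) 1 + τ)) = s := by
        intro e he
        obtain ⟨t, ht⟩ := blockT_add_of_le (a := c + (e : BlockT g)) (s := s) he
        obtain ⟨τ, hτ⟩ := exists_fac (wT g) (eq_zero_of_wT g) t
        refine ⟨τ, ?_⟩
        rw [fac_add, fac_add, fac_single, fac_single, hτ, ht]
        change (e : BlockT g) + (c + t) = c + e + t
        abel
      obtain ⟨τ, hτ⟩ := key a fun i => by
        have := hcle' i
        change (c : Fin m → ℕ) i + u i ≤ _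
        omega
      obtain ⟨τ', hτ'⟩ := key b fun i => by
        have := hcle' i
        change (c : Fin m → ℕ) i + v i ≤ _
        omega
      have h1 := share a _ _ hα hτ
      have h3 := share b _ _ hτ' hγ
      rw [add_left_comm] at h1 hτ h3 hτ'
      exact (h1.trans (share _ _ _ hτ hτ')).trans h3
    -- lowering `a ⊔ b` at `x`, where `b` exceeds `a`, and at `y`, where `a` exceeds `b`,
    -- leaves degree at least `d + 1`
    · obtain ⟨x, hx⟩ := exists_lt_of_atoms_ne a.2 b.2 hab'
      obtain ⟨y, hy⟩ := exists_lt_of_atoms_ne b.2 a.2 hab'.symm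
      change u x < v x at hx
      change v y < u y at hy
      have hxy : x ≠ y := by
        rintro rfl
        omega
      let z : Fin m → ℕ := fun i =>
        max (u i) (v i) - ((Pi.single x 1 : Fin m → ℕ) i + (Pi.single y 1 : Fin m → ℕ) i)
      have hz : ∀ i, z i =
          max (u i) (v i) - ((Pi.single x 1 : Fin m → ℕ) i + (Pi.single y 1 : Fin m → ℕ) i) :=
        fun i => rfl
      have hzsum : d < ∑ i, z i := by
        have hadd : ∑ i, z i + ((∑ i, (Pi.single x 1 : Fin m → ℕ) i) +
            ∑ i, (Pi.single y 1 : Fin m → ℕ) i) = ∑ i, max (u i) (v i) := by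
          rw [← Finset.sum_add_distrib, ← Finset.sum_add_distrib]
          refine Finset.sum_congr rfl fun i _ => ?_
          rw [hz]
          refine tsub_add_cancel_of_le ?_
          simp only [Pi.single_apply]
          split_ifs with h1 h2 h2
          · exact absurd (h1.symm.trans h2) hxy
          · subst h1
            omega
          · subst h2
            omega
          · omega
        rw [Finset.sum_pi_single', Finset.sum_pi_single', if_pos (Finset.mem_univ _),
          if_pos (Finset.mem_univ _)] at hadd
        omega
      obtain ⟨c, hc, hcle⟩ := hd z hzsum
      -- `c` stays below `a ⊔ b`, strictly below `b` at `x` and strictly below `a` at `y`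
      have hzle : ∀ i, (c : Fin m → ℕ) i ≤ max (u i) (v i) := fun i =>
        (hcle i).trans tsub_le_self
      have hcx : (c : Fin m → ℕ) x < v x := by
        have h1 : (c : Fin m → ℕ) x ≤ z x := hcle x
        rw [hz, Pi.single_eq_same] at h1
        omega
      have hcy : (c : Fin m → ℕ) y < u y := by
        have h1 : (c : Fin m → ℕ) y ≤ z y := hcle y
        rw [hz, Pi.single_eq_same] at h1
        omega
      have hcs : (c : Fin m → ℕ) ≤ s := fun i => (hzle i).trans (max_le (hus i) (hvs i))
      obtain ⟨τ, hτ⟩ := exists_fac_of_le (⟨c, hc⟩ : Atoms (BlockT g)) hcs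
      have hac : ∑ i, max (u i) ((c : Fin m → ℕ) i) < n := by
        rw [← hn]
        refine Finset.sum_lt_sum (fun i _ => max_le (le_max_left _ _) (hzle i))
          ⟨x, Finset.mem_univ x, ?_⟩
        change max (u x) ((c : Fin m → ℕ) x) < max (u x) (v x)
        omega
      have hcb : ∑ i, max ((c : Fin m → ℕ) i) (v i) < n := by
        rw [← hn]
        refine Finset.sum_lt_sum (fun i _ => max_le (hzle i) (le_max_right _ _))
          ⟨y, Finset.mem_univ y, ?_⟩
        change max ((c : Fin m → ℕ) y) (v y) < max (u y) (v y)
        omega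
      exact (ih _ hac a ⟨c, hc⟩ rfl α τ hα hτ).trans (ih _ hcb ⟨c, hc⟩ b rfl τ γ hτ hγ)

lemma exists_eq_single_add {σ : Type*} (α : σ →₀ ℕ) (h : α ≠ 0) :
    ∃ (a : σ) (β : σ →₀ ℕ), α = Finsupp.single a 1 + β := by
  obtain ⟨a, ha⟩ := Finsupp.ne_iff.1 h
  have ha' : α a ≠ 0 := ha
  refine ⟨a, α - Finsupp.single a 1, (add_tsub_cancel_of_le ?_).symm⟩
  exact Finsupp.single_le_iff.2 (by omega)

lemma linked_of_fac_eq {g : Fin m → G} {d : ℕ}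
    (hd : ∀ α : Fin m → ℕ, d < ∑ i, α i → ∃ c : BlockT g, IsAtm c ∧ (c : Fin m → ℕ) ≤ α)
    (α γ : FreeExp (BlockT g)) (h : fac α = fac γ) :
    Linked (wT g) (2 * d + 2) α γ := by
  induction hN : wT g (fac α) using Nat.strong_induction_on generalizing α γ with
  | _ N ih =>
    by_cases hs : N ≤ 2 * d + 2
    · exact linked_of_le h (hN ▸ hs)
    have hne : fac α ≠ 0 := by
      intro h0
      rw [h0, map_zero] at hN
      omega
    obtain ⟨a, α, rfl⟩ := exists_eq_single_add α (by rintro rfl; simp [fac] at hne)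
    obtain ⟨b, γ, rfl⟩ := exists_eq_single_add γ (by rintro rfl; exact hne (by rw [h]; simp [fac]))
    -- a shared atom is cancelled, and the rest is linked by induction on the degree
    refine linked_of_atoms hd (s := fac (Finsupp.single a 1 + α)) (by omega) ?_ _ a b rfl α γ rfl
      h.symm
    intro e β δ hβ hδ
    have hcancel : fac β = fac δ := by
      have h1 := hβ.trans hδ.symm
      rw [fac_add, fac_add] at h1
      have h2 := congrArg Subtype.val h1
      exact Subtype.ext (add_left_cancel h2)
    have hwe : wT g (e : BlockT g) ≠ 0 := fun h0 => e.2.1 (eq_zero_of_wT g _ h0)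
    have hsum : N = wT g (e : BlockT g) + wT g (fac β) := by
      rw [← hN, ← hβ, fac_add, fac_single, map_add]
    have hl := (ih _ (by omega) β δ hcancel rfl).add_right (Finsupp.single e 1)
    rwa [add_comm β, add_comm δ] at hl

end Catenary

/-- Theorem 6.2 (ii): if `g₁, …, g_m` generate a finite subgroup of `G`,
then `c_gr(ℬ(g)) ≤ 2·d(supp g) + 2` (grading by total degree). -/
theorem graded_catenary_davenport_bound (G : Type) [CommGroup G] (m : ℕ) (g : Fin m → G)
    (hfin : (Subgroup.closure (Set.range g) : Set G).Finite) :
    catDegGr ↥(BlockT g) (fun α => ∑ i, (α : Fin m → ℕ) i) ≤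
      2 * littleDav (Set.range g) + 2 :=
  Nat.sInf_le fun α γ h => (linked_of_fac_eq (exists_atom_le g hfin) α γ h).chainConnGr
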